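/- Let ℓ be an integer with ℓ ≠ 0 and ℓ ≠ 1, and set m = 3ℓ(1−ℓ). Then the Weierstrass curve E over ℚ given by the affine equation V² = U³ + (4−2m)·U² + m²·U has nonzero discriminant (so E is an elliptic curve), the pair P = (9(2ℓ−1)²/4, 9(2ℓ−1)(16ℓ²−16ℓ+5)/8) is a rational affine point of E, and P has infinite order in the group of rational points of E, i.e. n • P ≠ 0 for every positive integer n. In particular E has infinitely many rational points. -/

import Mathlib

/-!
Let `v` be a valuation with `v 2 < 1` and let `(x, y)` be a point of a curve
`y² = x³ + a₂x² + a₄x + a₆` with `v`-integral coefficients. In the duplication formula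
`x(2P) = (x⁴ - b₄x² - 2b₆x - b₈) / (4(x³ + a₂x² + a₄x + a₆))` the leading terms dominate as soon as
`1 < v x`, so `v (x(2P)) = v x / v 4 > v x`. Repeated doubling thus makes the abscissa ever larger,
and no point with non-integral abscissa is torsion. The point `P` of the theorem has abscissa
`(3(2ℓ - 1) / 2)²`, a square with odd numerator over `4`.
-/

open Polynomial WeierstrassCurve WeierstrassCurve.Affine

theorem not_isOfFinAddOrder_of_forall_lt_nsmul {G α : Type*} [AddMonoid G] [Preorder α]
    (f : G → α) (c : α) (n : ℕ) (hf : ∀ a, c < f a → f a < f (n • a)) {a : G} (ha : c < f a) :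
    ¬ IsOfFinAddOrder a := by
  have lt_f (k : ℕ) : c < f (n ^ k • a) := by
    induction k with
    | zero => simpa only [pow_zero, one_nsmul] using ha
    | succ k ih => simpa only [pow_succ', mul_nsmul'] using ih.trans (hf _ ih)
  have strictMono : StrictMono fun k : ℕ => f (n ^ k • a) :=
    strictMono_nat_of_lt_succ fun k => by
      simpa only [pow_succ', mul_nsmul'] using hf _ (lt_f k)
  have injective : Function.Injective fun k : ℕ => n ^ k • a :=
    Function.Injective.of_comp (f := f) strictMono.injective
  exact fun finOrder => Set.infinite_range_of_injective injective <|
    finOrder.finite_multiples.subset (Set.range_subset_iff.2 fun k => ⟨n ^ k, rfl⟩)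

section Valuation

variable {R Γ₀ : Type*} [Ring R] [LinearOrderedCommGroupWithZero Γ₀] (v : Valuation R Γ₀)

theorem valuation_one_add_two_mul (hv2 : v 2 < 1) {a : R} (ha : v a ≤ 1) : v (1 + 2 * a) = 1 :=
  v.map_one_add_of_lt <| by simpa only [map_mul] using mul_lt_one_of_lt_of_le hv2 ha

theorem valuation_quadratic_le {a b c x : R} (ha : v a ≤ 1) (hb : v b ≤ 1) (hc : v c ≤ 1)
    (hx : 1 ≤ v x) : v (a * x ^ 2 + b * x + c) ≤ v x ^ 2 := by
  refine v.map_add_le (v.map_add_le ?_ ?_) (hc.trans (one_le_pow₀ hx))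
  · simpa only [map_mul, map_pow] using mul_le_of_le_one_left' ha
  · calc v (b * x) ≤ v x := by simpa only [map_mul] using mul_le_of_le_one_left' hb
      _ ≤ v x ^ 2 := le_self_pow₀ hx two_ne_zero

theorem valuation_pow_add_quadratic {a b c x : R} (ha : v a ≤ 1) (hb : v b ≤ 1) (hc : v c ≤ 1)
    (hx : 1 < v x) {n : ℕ} (hn : 2 < n) : v (x ^ n + (a * x ^ 2 + b * x + c)) = v x ^ n := by
  rw [v.map_add_eq_of_lt_left, map_pow]
  calc v (a * x ^ 2 + b * x + c) ≤ v x ^ 2 := valuation_quadratic_le v ha hb hc hx.le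
    _ < v x ^ n := pow_lt_pow_right₀ hx hn
    _ = v (x ^ n) := (map_pow v x n).symm

end Valuation

section Duplication

variable {F : Type*} [Field F] {W : Affine F} {x y : F}

theorem sub_negY_sq (h : W.Equation x y) : (y - W.negY x y) ^ 2 = W.Ψ₂Sq.eval x := by
  rw [equation_iff] at h
  simp only [Ψ₂Sq, negY, b₂, b₄, b₆, eval_add, eval_mul, eval_pow, eval_C, eval_X]
  linear_combination 4 * h

theorem addX_slope_self_mul_eval_Ψ₂Sq [DecidableEq F] (h : W.Equation x y)
    (hy : y ≠ W.negY x y) :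
    W.addX x x (W.slope x x y y) * W.Ψ₂Sq.eval x = (W.Φ 2).eval x := by
  have slope_mul : W.slope x x y y * (y - W.negY x y) =
      3 * x ^ 2 + 2 * W.a₂ * x + W.a₄ - W.a₁ * y := by
    rw [slope_of_Y_ne rfl hy, div_mul_cancel₀ _ (sub_ne_zero.2 hy)]
  rw [← sub_negY_sq h, Φ_two]
  rw [equation_iff] at h
  simp only [b₄, b₆, b₈, eval_sub, eval_mul, eval_pow, eval_C, eval_X]
  generalize W.slope x x y y = s at slope_mul ⊢
  simp only [addX, negY] at slope_mul ⊢
  linear_combination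
    (s * (2 * y + W.a₁ * x + W.a₃) + (3 * x ^ 2 + 2 * W.a₂ * x + W.a₄ - W.a₁ * y) +
      W.a₁ * (2 * y + W.a₁ * x + W.a₃)) * slope_mul -
    (W.a₁ ^ 2 + 4 * W.a₂ + 8 * x) * h

end Duplication

section XValuation

variable {K Γ₀ : Type*} [Field K] [LinearOrderedCommGroupWithZero Γ₀] (v : Valuation K Γ₀)
  {W : Affine K}

/-- The size `v x` of the abscissa of an affine point `(x, y)`, which measures how far the point is
from being `v`-integral. The point at infinity is given the value `0`, so that `1 < xValuation v P`
forces `P` to be affine. -/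
def xValuation : W.Point → Γ₀
  | .zero => 0
  | .some x _ _ => v x

variable [W.IsCharNeTwoNF] (ha₂ : v W.a₂ ≤ 1) (ha₄ : v W.a₄ ≤ 1) (ha₆ : v W.a₆ ≤ 1)
include ha₂ ha₄ ha₆

theorem valuation_eval_Ψ₂Sq {x : K} (hx : 1 < v x) : v (W.Ψ₂Sq.eval x) = v 4 * v x ^ 3 := by
  have eval_eq : W.Ψ₂Sq.eval x = 4 * (x ^ 3 + (W.a₂ * x ^ 2 + W.a₄ * x + W.a₆)) := by
    simp only [Ψ₂Sq, b₂_of_isCharNeTwoNF, b₄_of_isCharNeTwoNF, b₆_of_isCharNeTwoNF, eval_add,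
      eval_mul, eval_pow, eval_C, eval_X]
    ring
  rw [eval_eq, map_mul, valuation_pow_add_quadratic v ha₂ ha₄ ha₆ hx (by norm_num)]

theorem valuation_eval_Φ_two {x : K} (hx : 1 < v x) : v ((W.Φ 2).eval x) = v x ^ 4 := by
  have b₄_mem : W.b₄ ∈ v.integer := by
    rw [b₄_of_isCharNeTwoNF]
    exact mul_mem (ofNat_mem _ 2) ha₄
  have b₆_mem : W.b₆ ∈ v.integer := by
    rw [b₆_of_isCharNeTwoNF]
    exact mul_mem (ofNat_mem _ 4) ha₆
  have b₈_mem : W.b₈ ∈ v.integer := by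
    rw [b₈_of_isCharNeTwoNF]
    exact sub_mem (mul_mem (mul_mem (ofNat_mem _ 4) ha₂) ha₆) (pow_mem ha₄ 2)
  have eval_eq : (W.Φ 2).eval x = x ^ 4 + (-W.b₄ * x ^ 2 + -(2 * W.b₆) * x + -W.b₈) := by
    simp only [Φ_two, eval_sub, eval_mul, eval_pow, eval_C, eval_X]
    ring
  rw [eval_eq, valuation_pow_add_quadratic v (neg_mem b₄_mem)
    (neg_mem (mul_mem (ofNat_mem _ 2) b₆_mem)) (neg_mem b₈_mem) hx (by norm_num)]

theorem xValuation_two_nsmul_mul [DecidableEq K] (h2 : (2 : K) ≠ 0) {P : W.Point}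
    (hP : 1 < xValuation v P) : xValuation v (2 • P) * v 4 = xValuation v P := by
  obtain _ | ⟨x, y, h⟩ := P
  · exact absurd hP not_lt_zero
  have hx : 1 < v x := hP
  have vx_ne : v x ≠ 0 := (zero_lt_one.trans hx).ne'
  have v4_ne : v 4 ≠ 0 := v.ne_zero_iff.2 <| by
    rw [show (4 : K) = 2 ^ 2 by norm_num]; exact pow_ne_zero 2 h2
  have vΨ := valuation_eval_Ψ₂Sq v ha₂ ha₄ ha₆ hx
  have hy : y ≠ W.negY x y := by
    intro hy
    rw [← sub_negY_sq h.1, sub_eq_zero.2 hy, zero_pow two_ne_zero, map_zero] at vΨ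
    exact mul_ne_zero v4_ne (pow_ne_zero 3 vx_ne) vΨ.symm
  have duplication := congrArg v (addX_slope_self_mul_eval_Ψ₂Sq h.1 hy)
  rw [map_mul, vΨ, valuation_eval_Φ_two v ha₂ ha₄ ha₆ hx] at duplication
  rw [two_nsmul, Point.add_self_of_Y_ne hy]
  refine mul_right_cancel₀ (pow_ne_zero 3 vx_ne) ?_
  simpa only [xValuation, mul_assoc, pow_succ'] using duplication

theorem not_isOfFinAddOrder_of_one_lt_xValuation [DecidableEq K] (h2 : (2 : K) ≠ 0)
    (hv2 : v 2 < 1) {P : W.Point} (hP : 1 < xValuation v P) : ¬ IsOfFinAddOrder P := by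
  refine not_isOfFinAddOrder_of_forall_lt_nsmul (xValuation v) 1 2 (fun Q hQ => ?_) hP
  have v4_lt : v 4 < 1 := by
    rw [show (4 : K) = 2 ^ 2 by norm_num, map_pow]
    exact pow_lt_one₀ zero_le hv2 two_ne_zero
  have two_nsmul_mul := xValuation_two_nsmul_mul v ha₂ ha₄ ha₆ h2 hQ
  have two_nsmul_pos : 0 < xValuation v (2 • Q) := by
    refine zero_lt_iff.2 fun h0 => ?_
    rw [h0, zero_mul] at two_nsmul_mul
    exact not_lt_zero (two_nsmul_mul ▸ hQ)
  calc xValuation v Q = xValuation v (2 • Q) * v 4 := two_nsmul_mul.symm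
    _ < xValuation v (2 • Q) := mul_lt_of_lt_one_right two_nsmul_pos v4_lt

end XValuation

section MarkoffFiber

variable {K : Type*} [Field K]

/-- The curve `V² = U³ + (4 - 2m)U² + m²U`, the Weierstrass form of the fiber over `[1 : 0]` of the
Markoff-type K3 surface when `m = 3ℓ(1 - ℓ)`. -/
def markoffFiber (m : K) : Affine K :=
  { a₁ := 0, a₂ := 4 - 2 * m, a₃ := 0, a₄ := m ^ 2, a₆ := 0 }

instance (m : K) : (markoffFiber m).IsCharNeTwoNF := ⟨rfl, rfl⟩

theorem Δ_markoffFiber (m : K) : (markoffFiber m).Δ = 2 ^ 8 * m ^ 4 * (1 - m) := by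
  rw [Δ_of_isCharNeTwoNF, markoffFiber]
  ring

theorem equation_markoffFiber (h2 : (2 : K) ≠ 0) (ℓ : K) :
    (markoffFiber (3 * ℓ * (1 - ℓ))).Equation (9 * (2 * ℓ - 1) ^ 2 / 4)
      (9 * (2 * ℓ - 1) * (16 * ℓ ^ 2 - 16 * ℓ + 5) / 8) := by
  rw [equation_iff, markoffFiber, show (4 : K) = 2 ^ 2 by norm_num,
    show (8 : K) = 2 ^ 3 by norm_num]
  field_simp
  ring

theorem one_lt_valuation_abscissa {Γ₀ : Type*} [LinearOrderedCommGroupWithZero Γ₀]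
    (v : Valuation K Γ₀) (h2 : (2 : K) ≠ 0) (hv2 : v 2 < 1) {ℓ : K} (hℓ : v ℓ ≤ 1) :
    1 < v (9 * (2 * ℓ - 1) ^ 2 / 4) := by
  have eq_sq : 9 * (2 * ℓ - 1) ^ 2 / 4 = ((1 + 2 * (3 * ℓ - 2)) / 2) ^ 2 := by
    rw [div_pow]; congr 1 <;> ring
  have integral : 3 * ℓ - 2 ∈ v.integer :=
    sub_mem (mul_mem (ofNat_mem _ 3) hℓ) (ofNat_mem _ 2)
  rw [eq_sq, map_pow, map_div₀, valuation_one_add_two_mul v hv2 integral, one_div]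
  exact one_lt_pow₀ ((one_lt_inv₀ (v.pos_iff.2 h2)).2 hv2) two_ne_zero

theorem stmt0_general [DecidableEq K] {Γ₀ : Type*} [LinearOrderedCommGroupWithZero Γ₀]
    (v : Valuation K Γ₀) (h2 : (2 : K) ≠ 0) (hv2 : v 2 < 1) (ℓ : K) (hℓ : v ℓ ≤ 1)
    (hℓ0 : ℓ ≠ 0) (hℓ1 : ℓ ≠ 1) (m : K) (hm : m = 3 * ℓ * (1 - ℓ)) (hm1 : m ≠ 1)
    (W : Affine K) (hW : W = markoffFiber m) :
    W.Δ ≠ 0 ∧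
    ∃ h : W.Nonsingular (9 * (2 * ℓ - 1) ^ 2 / 4)
        (9 * (2 * ℓ - 1) * (16 * ℓ ^ 2 - 16 * ℓ + 5) / 8),
      (∀ n : ℕ, 0 < n → n • (Point.some _ _ h) ≠ (0 : W.Point)) ∧ Infinite W.Point := by
  subst hW
  have hv3 : v 3 = 1 := by
    rw [show (3 : K) = 1 + 2 * 1 by norm_num, valuation_one_add_two_mul v hv2 v.map_one.le]
  have h3 : (3 : K) ≠ 0 := v.ne_zero_iff.1 (hv3 ▸ one_ne_zero)
  have hm0 : m ≠ 0 := hm ▸ mul_ne_zero (mul_ne_zero h3 hℓ0) (sub_ne_zero.2 hℓ1.symm)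
  have hΔ : (markoffFiber m).Δ ≠ 0 := by
    rw [Δ_markoffFiber]
    exact mul_ne_zero (mul_ne_zero (pow_ne_zero 8 h2) (pow_ne_zero 4 hm0)) (sub_ne_zero.2 hm1.symm)
  have hP := (equation_iff_nonsingular_of_Δ_ne_zero hΔ).1 (hm ▸ equation_markoffFiber h2 ℓ)
  have m_mem : m ∈ v.integer :=
    hm ▸ mul_mem (mul_mem (ofNat_mem _ 3) hℓ) (sub_mem (one_mem _) hℓ)
  have a₂_mem : (markoffFiber m).a₂ ∈ v.integer :=
    sub_mem (ofNat_mem _ 4) (mul_mem (ofNat_mem _ 2) m_mem)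
  have infinite_order : ¬ IsOfFinAddOrder (Point.some _ _ hP) :=
    not_isOfFinAddOrder_of_one_lt_xValuation v a₂_mem (pow_mem m_mem 2) (zero_mem v.integer) h2 hv2
      (one_lt_valuation_abscissa v h2 hv2 hℓ)
  refine ⟨hΔ, hP, fun n hn h0 => infinite_order ?_, ?_⟩
  · exact isOfFinAddOrder_iff_nsmul_eq_zero.2 ⟨n, hn, h0⟩
  · exact not_finite_iff_infinite.1 fun _ => infinite_order (isOfFinAddOrder_of_finite _)

end MarkoffFiber

theorem three_mul_mul_one_sub_ne_one (ℓ : ℤ) : 3 * ℓ * (1 - ℓ) ≠ 1 := fun h =>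
  (by norm_num : ¬ (3 : ℤ) ∣ 1) ⟨ℓ * (1 - ℓ), by rw [← mul_assoc, h]⟩

/-- Let `ℓ` be an integer with `ℓ ≠ 0` and `ℓ ≠ 1`, and set `m = 3ℓ(1−ℓ)`.
Then the Weierstrass curve `E : V² = U³ + (4−2m)U² + m²U` over `ℚ` has nonzero discriminant,
the point `P = (9(2ℓ−1)²/4, 9(2ℓ−1)(16ℓ²−16ℓ+5)/8)` is a nonsingular rational point on `E`
of infinite order, and `E` has infinitely many rational points. -/
theorem stmt0 (ℓ : ℤ) (hℓ0 : ℓ ≠ 0) (hℓ1 : ℓ ≠ 1)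
    (m : ℚ) (hm : m = 3 * (ℓ : ℚ) * (1 - (ℓ : ℚ)))
    (W : WeierstrassCurve.Affine ℚ)
    (hW : W = { a₁ := 0, a₂ := 4 - 2 * m, a₃ := 0, a₄ := m ^ 2, a₆ := 0 }) :
    W.Δ ≠ 0 ∧
    ∃ h : W.Nonsingular (9 * (2 * (ℓ : ℚ) - 1) ^ 2 / 4)
        (9 * (2 * (ℓ : ℚ) - 1) * (16 * (ℓ : ℚ) ^ 2 - 16 * (ℓ : ℚ) + 5) / 8),
      (∀ n : ℕ, 0 < n →
        n • (WeierstrassCurve.Affine.Point.some _ _ h) ≠ (0 : W.Point)) ∧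
      Infinite W.Point := by
  have hm1 : m ≠ 1 := by rw [hm]; exact_mod_cast three_mul_mul_one_sub_ne_one ℓ
  exact stmt0_general (Rat.padicValuation 2) two_ne_zero
    (Int.padicValuation_lt_one_iff.2 (dvd_refl 2)) ℓ (Int.padicValuation_le_one 2 ℓ)
    (mod_cast hℓ0) (mod_cast hℓ1) m hm hm1 W hW
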